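/- For all integers q₁, q₂ > 1, all primitive quadratic Dirichlet characters χ₁ mod q₁ and χ₂ mod q₂, every real number w, and every real x ≥ 1, the partial sum satisfies A₀(x,w) ≥ 1. -/

import Mathlib

open Finset

/-- The Dirichlet series coefficients of
`f(s) = ζ(s) L(s,χ₁) L(s,χ₂) L(s,χ₁χ₂)`, given explicitly by
`a n = Σ_{j k l m = n} χ₁(k) χ₂(l) χ₁(m) χ₂(m)`. -/
noncomputable def goldfeldCoeff {q₁ q₂ : ℕ} (χ₁ : DirichletCharacter ℂ q₁)
    (χ₂ : DirichletCharacter ℂ q₂) (n : ℕ) : ℂ :=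
  ∑ p ∈ n.divisorsAntidiagonal, ∑ r ∈ p.2.divisorsAntidiagonal,
    ∑ t ∈ r.2.divisorsAntidiagonal,
      χ₁ (r.1 : ZMod q₁) * χ₂ (t.1 : ZMod q₂) * χ₁ (t.2 : ZMod q₁) * χ₂ (t.2 : ZMod q₂)

/-- The partial sum `A₀(x,w) = Σ_{n ≤ x} a n * n ^ (-w)`. -/
noncomputable def goldfeldA₀ {q₁ q₂ : ℕ} (χ₁ : DirichletCharacter ℂ q₁)
    (χ₂ : DirichletCharacter ℂ q₂) (x w : ℝ) : ℂ :=
  ∑ n ∈ Icc 1 ⌊x⌋₊, goldfeldCoeff χ₁ χ₂ n * (((n : ℝ) ^ (-w) : ℝ) : ℂ)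

open scoped ComplexOrder in
/-- geometric series -/
noncomputable def gfGeo (c : ℂ) : PowerSeries ℂ := PowerSeries.mk fun n => c ^ n

open scoped ComplexOrder in
/-- nonnegative coefficients -/
def gfNonneg (P : PowerSeries ℂ) : Prop := ∀ n, 0 ≤ PowerSeries.coeff n P

open scoped ComplexOrder in
lemma gfNonneg_mul {P Q : PowerSeries ℂ} (hP : gfNonneg P) (hQ : gfNonneg Q) :
    gfNonneg (P * Q) := by
  intro n
  rw [PowerSeries.coeff_mul]
  exact Finset.sum_nonneg fun p _ => mul_nonneg (hP _) (hQ _)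

open scoped ComplexOrder in
lemma gfNonneg_geo {c : ℂ} (hc : 0 ≤ c) : gfNonneg (gfGeo c) := by
  intro n
  simpa [gfGeo] using pow_nonneg hc n

open scoped ComplexOrder in
lemma gfNonneg_one_neg : gfNonneg (gfGeo 1 * gfGeo (-1)) := by
  intro n
  rw [PowerSeries.coeff_mul, Finset.Nat.sum_antidiagonal_eq_sum_range_succ_mk,
    ← Finset.sum_range_reflect]
  have : ∀ j ∈ Finset.range (n + 1), (PowerSeries.coeff (n + 1 - 1 - j)) (gfGeo 1) *
      (PowerSeries.coeff (n - (n + 1 - 1 - j))) (gfGeo (-1)) = (-1 : ℂ) ^ j := by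
    intro j hj
    have : n - (n + 1 - 1 - j) = j := by
      have := Finset.mem_range.mp hj
      omega
    rw [this]
    simp [gfGeo]
  rw [Finset.sum_congr rfl this, neg_one_geom_sum]
  split_ifs
  exacts [le_rfl, zero_le_one]

open scoped ComplexOrder in
lemma gfNonneg_pair {c : ℂ} (hc : c = 0 ∨ c = 1 ∨ c = -1) : gfNonneg (gfGeo c * gfGeo (-c)) := by
  rcases hc with rfl | rfl | rfl
  · rw [neg_zero]
    exact gfNonneg_mul (gfNonneg_geo le_rfl) (gfNonneg_geo le_rfl)
  · exact gfNonneg_one_neg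
  · rw [neg_neg, mul_comm]
    exact gfNonneg_one_neg

open scoped ComplexOrder in
lemma gfNonneg_quad {a b : ℂ} (ha : a = 0 ∨ a = 1 ∨ a = -1) (hb : b = 0 ∨ b = 1 ∨ b = -1) :
    gfNonneg (gfGeo 1 * (gfGeo a * (gfGeo b * gfGeo (a * b)))) := by
  by_cases hb1 : b = -1
  · have : gfGeo 1 * (gfGeo a * (gfGeo b * gfGeo (a * b))) =
        (gfGeo 1 * gfGeo (-1)) * (gfGeo a * gfGeo (-a)) := by
      rw [hb1, mul_neg_one]; ring
    rw [this]
    exact gfNonneg_mul gfNonneg_one_neg (gfNonneg_pair ha)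
  by_cases ha1 : a = -1
  · have : gfGeo 1 * (gfGeo a * (gfGeo b * gfGeo (a * b))) =
        (gfGeo 1 * gfGeo (-1)) * (gfGeo b * gfGeo (-b)) := by
      rw [ha1, neg_one_mul]; ring
    rw [this]
    exact gfNonneg_mul gfNonneg_one_neg (gfNonneg_pair hb)
  have ha0 : 0 ≤ a := by
    rcases ha with h | h | h
    · exact h.ge
    · rw [h]; exact zero_le_one
    · exact absurd h ha1
  have hb0 : 0 ≤ b := by
    rcases hb with h | h | h
    · exact h.ge
    · rw [h]; exact zero_le_one
    · exact absurd h hb1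
  exact gfNonneg_mul (gfNonneg_geo zero_le_one) (gfNonneg_mul (gfNonneg_geo ha0)
    (gfNonneg_mul (gfNonneg_geo hb0) (gfNonneg_geo (mul_nonneg ha0 hb0))))

/-- arithmetic function of a completely multiplicative function -/
noncomputable def gfArith (f : ℕ →* ℂ) : ArithmeticFunction ℂ :=
  ⟨fun n => if n = 0 then 0 else f n, by simp⟩

lemma gfArith_apply (f : ℕ →* ℂ) {n : ℕ} (hn : n ≠ 0) : gfArith f n = f n := by
  simp [gfArith, hn]

lemma gfArith_mult (f : ℕ →* ℂ) : (gfArith f).IsMultiplicative := by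
  rw [ArithmeticFunction.IsMultiplicative.iff_ne_zero]
  refine ⟨by simp [gfArith], fun {m n} hm hn _ => ?_⟩
  rw [gfArith_apply f hm, gfArith_apply f hn, gfArith_apply f (mul_ne_zero hm hn), map_mul]

/-- local series -/
noncomputable def gfLoc (p : ℕ) (F : ArithmeticFunction ℂ) : PowerSeries ℂ :=
  PowerSeries.mk fun k => F (p ^ k)

lemma gfLoc_arith {p : ℕ} (hp : p.Prime) (f : ℕ →* ℂ) : gfLoc p (gfArith f) = gfGeo (f p) := by
  ext k
  simp [gfLoc, gfGeo, gfArith_apply f (pow_ne_zero k hp.ne_zero)]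

lemma gfLoc_mul {p : ℕ} (hp : p.Prime) (F G : ArithmeticFunction ℂ) :
    gfLoc p (F * G) = gfLoc p F * gfLoc p G := by
  ext k
  rw [PowerSeries.coeff_mul, Finset.Nat.sum_antidiagonal_eq_sum_range_succ_mk]
  simp only [gfLoc, PowerSeries.coeff_mk, ArithmeticFunction.mul_apply]
  rw [Nat.sum_divisorsAntidiagonal (fun a b => F a * G b), Nat.sum_divisors_prime_pow hp]
  refine Finset.sum_congr rfl fun j hj => ?_
  rw [Nat.pow_div (Nat.lt_succ_iff.mp (Finset.mem_range.mp hj)) hp.pos]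

/-- character as monoid hom on naturals -/
noncomputable def gfChar {q : ℕ} (χ : DirichletCharacter ℂ q) : ℕ →* ℂ :=
  χ.toMonoidHom.comp (Nat.castRingHom (ZMod q)).toMonoidHom

lemma gfChar_apply {q : ℕ} (χ : DirichletCharacter ℂ q) (n : ℕ) :
    gfChar χ n = χ (n : ZMod q) := rfl

lemma goldfeldCoeff_eq {q₁ q₂ : ℕ} (χ₁ : DirichletCharacter ℂ q₁)
    (χ₂ : DirichletCharacter ℂ q₂) (n : ℕ) :
    goldfeldCoeff χ₁ χ₂ n = (gfArith 1 * (gfArith (gfChar χ₁) * (gfArith (gfChar χ₂) *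
      gfArith (gfChar χ₁ * gfChar χ₂)))) n := by
  unfold goldfeldCoeff
  simp only [ArithmeticFunction.mul_apply, Finset.mul_sum]
  refine Finset.sum_congr rfl fun p hp => Finset.sum_congr rfl fun r hr =>
    Finset.sum_congr rfl fun t ht => ?_
  have h1 := Nat.ne_zero_of_mem_divisorsAntidiagonal hp
  have h2 := Nat.ne_zero_of_mem_divisorsAntidiagonal hr
  have h3 := Nat.ne_zero_of_mem_divisorsAntidiagonal ht
  rw [gfArith_apply _ h1.1, gfArith_apply _ h2.1, gfArith_apply _ h3.1, gfArith_apply _ h3.2]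
  simp only [MonoidHom.one_apply, MonoidHom.mul_apply, gfChar_apply]
  ring

open scoped ComplexOrder in
lemma goldfeldCoeff_nonneg {q₁ q₂ : ℕ} (χ₁ : DirichletCharacter ℂ q₁)
    (χ₂ : DirichletCharacter ℂ q₂) (h₁ : χ₁ ^ 2 = 1) (h₂ : χ₂ ^ 2 = 1) {n : ℕ} (hn : n ≠ 0) :
    0 ≤ goldfeldCoeff χ₁ χ₂ n := by
  rw [goldfeldCoeff_eq]
  have hm := (gfArith_mult 1).mul ((gfArith_mult (gfChar χ₁)).mul ((gfArith_mult (gfChar χ₂)).mul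
    (gfArith_mult (gfChar χ₁ * gfChar χ₂))))
  rw [hm.multiplicative_factorization _ hn]
  refine Finset.prod_nonneg fun p hp => ?_
  have hp' : p.Prime := Nat.prime_of_mem_primeFactors hp
  have key := gfNonneg_quad (MulChar.isQuadratic_iff_sq_eq_one.mpr h₁ p)
    (MulChar.isQuadratic_iff_sq_eq_one.mpr h₂ p) (n.factorization p)
  have e : gfLoc p (gfArith 1 * (gfArith (gfChar χ₁) * (gfArith (gfChar χ₂) *
      gfArith (gfChar χ₁ * gfChar χ₂)))) =
      gfGeo 1 * (gfGeo (χ₁ p) * (gfGeo (χ₂ p) * gfGeo (χ₁ p * χ₂ p))) := by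
    simp only [gfLoc_mul hp', gfLoc_arith hp', MonoidHom.one_apply, MonoidHom.mul_apply,
      gfChar_apply]
  rw [← e] at key
  simpa only [gfLoc, PowerSeries.coeff_mk] using key

lemma goldfeldCoeff_one {q₁ q₂ : ℕ} (χ₁ : DirichletCharacter ℂ q₁)
    (χ₂ : DirichletCharacter ℂ q₂) : goldfeldCoeff χ₁ χ₂ 1 = 1 := by
  simp [goldfeldCoeff]

/-- For every real `w` and every `x ≥ 1`, the partial sum `A₀(x,w)` is a real number `≥ 1`. -/
theorem goldfeldA₀_ge_one (q₁ q₂ : ℕ) (hq₁ : 1 < q₁) (hq₂ : 1 < q₂)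
    (χ₁ : DirichletCharacter ℂ q₁) (χ₂ : DirichletCharacter ℂ q₂)
    (hχ₁ : χ₁.IsPrimitive) (hχ₁' : χ₁ ≠ 1) (hχ₁'' : χ₁ ^ 2 = 1)
    (hχ₂ : χ₂.IsPrimitive) (hχ₂' : χ₂ ≠ 1) (hχ₂'' : χ₂ ^ 2 = 1)
    (w x : ℝ) (hx : 1 ≤ x) :
    ∃ r : ℝ, goldfeldA₀ χ₁ χ₂ x w = (r : ℂ) ∧ 1 ≤ r := by
  have hre : ∀ n ∈ Icc 1 ⌊x⌋₊, goldfeldCoeff χ₁ χ₂ n =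
      ((goldfeldCoeff χ₁ χ₂ n).re : ℂ) ∧ 0 ≤ (goldfeldCoeff χ₁ χ₂ n).re := by
    intro n hn
    have h := goldfeldCoeff_nonneg χ₁ χ₂ hχ₁'' hχ₂'' (n := n)
      (by have := (Finset.mem_Icc.mp hn).1; omega)
    rw [Complex.le_def] at h
    exact ⟨Complex.ext (by simp) (by simpa using h.2.symm), by simpa using h.1⟩
  refine ⟨∑ n ∈ Icc 1 ⌊x⌋₊, (goldfeldCoeff χ₁ χ₂ n).re * (n : ℝ) ^ (-w), ?_, ?_⟩
  · unfold goldfeldA₀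
    rw [Complex.ofReal_sum]
    refine Finset.sum_congr rfl fun n hn => ?_
    rw [Complex.ofReal_mul, ← (hre n hn).1]
  · have h1 : 1 ∈ Icc 1 ⌊x⌋₊ := Finset.mem_Icc.mpr ⟨le_rfl, (Nat.one_le_floor_iff x).mpr hx⟩
    have := Finset.single_le_sum
      (f := fun n : ℕ => (goldfeldCoeff χ₁ χ₂ n).re * (n : ℝ) ^ (-w))
      (fun n hn => mul_nonneg (hre n hn).2 (Real.rpow_nonneg (Nat.cast_nonneg n) _)) h1
    simpa [goldfeldCoeff_one] using this
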